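/- Suppose T(y) ≤ y and no data point lies strictly between T(y) and y (i.e., there is no x_i with T(y) < x_i < y). Then T(T(y)) ≤ T(y). -/

import Mathlib

open Finset

/-!
The mean `m = T y` balances the weighted deviations `x i - m` taken with the weights seen from `y`.
Moving the viewpoint from `y` down to `m` brings it closer to every point `x i ≤ m` and further
from every point `x i ≥ y`; as no point lies strictly between `m` and `y`, weight only grows on
nonpositive deviations and only shrinks on positive ones, so the balance tips downwards.
Some point of positive weight lies at or below its mean `m`; its weight grows, so the total weight
seen from `m` does not vanish even if the kernel is truncated.
-/

section CenterMass

variable {ι K E : Type*} [Field K] [LinearOrder K] [AddCommGroup E] [LinearOrder E]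
  [IsOrderedAddMonoid E] [Module K E] [IsStrictOrderedModule K E]
  {s : Finset ι} {w w' : ι → K} {x : ι → E}

theorem centerMass_le_iff_sum_smul_sub_nonpos {m : E} (hw : 0 < ∑ i ∈ s, w i) :
    s.centerMass w x ≤ m ↔ ∑ i ∈ s, w i • (x i - m) ≤ 0 := by
  simp only [centerMass, inv_smul_le_iff_of_pos hw, smul_sub, sum_sub_distrib, ← sum_smul,
    sub_nonpos]

variable [IsStrictOrderedRing K]

theorem exists_pos_weight_and_le_centerMass (hw : ∀ i ∈ s, 0 ≤ w i) (hpos : 0 < ∑ i ∈ s, w i) :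
    ∃ i ∈ s, 0 < w i ∧ x i ≤ s.centerMass w x := by
  classical
  rw [← sum_filter_ne_zero] at hpos
  obtain ⟨i, hi, hle⟩ := (concaveOn_id (𝕜 := K) (β := E) convex_univ).exists_le_of_centerMass
    (fun i hi ↦ hw i (mem_of_mem_filter i hi)) hpos (fun i _ ↦ Set.mem_univ (x i))
  rw [centerMass_filter_ne_zero] at hle
  obtain ⟨his, hne⟩ := mem_filter.1 hi
  exact ⟨i, his, (hw i his).lt_of_ne' hne, hle⟩

theorem centerMass_le_centerMass_of_weight_le (hw : ∀ i ∈ s, 0 ≤ w i) (hw' : ∀ i ∈ s, 0 ≤ w' i)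
    (hpos : 0 < ∑ i ∈ s, w i)
    (hbelow : ∀ i ∈ s, x i ≤ s.centerMass w x → w i ≤ w' i)
    (habove : ∀ i ∈ s, s.centerMass w x < x i → w' i ≤ w i) :
    s.centerMass w' x ≤ s.centerMass w x := by
  obtain ⟨j, hj, hwj, hxj⟩ := exists_pos_weight_and_le_centerMass (x := x) hw hpos
  have hpos' : 0 < ∑ i ∈ s, w' i := sum_pos' hw' ⟨j, hj, hwj.trans_le (hbelow j hj hxj)⟩
  rw [centerMass_le_iff_sum_smul_sub_nonpos hpos']
  calc ∑ i ∈ s, w' i • (x i - s.centerMass w x)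
      ≤ ∑ i ∈ s, w i • (x i - s.centerMass w x) := by
        refine sum_le_sum fun i hi ↦ ?_
        rcases le_or_gt (x i) (s.centerMass w x) with hle | hlt
        · rw [← sub_nonpos, ← sub_smul]
          exact smul_nonpos_of_nonneg_of_nonpos (sub_nonneg.2 (hbelow i hi hle))
            (sub_nonpos.2 hle)
        · exact smul_le_smul_of_nonneg_right (habove i hi hlt) (sub_nonneg.2 hlt.le)
    _ ≤ 0 := (centerMass_le_iff_sum_smul_sub_nonpos hpos).1 le_rfl

end CenterMass

section MeanShift

variable {ι K : Type*} [Field K]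

/-- The mean shift map of the data points `x i`, `i ∈ s`, for a kernel `k` evaluated at the signed
displacement `z - x i`; the bandwidth is absorbed into `k`. Where the weights sum to `0`, its
value is `0`. -/
def meanShift (k : K → K) (s : Finset ι) (x : ι → K) (z : K) : K :=
  (∑ i ∈ s, x i * k (z - x i)) / ∑ i ∈ s, k (z - x i)

theorem meanShift_eq_centerMass (k : K → K) (s : Finset ι) (x : ι → K) (z : K) :
    meanShift k s x z = s.centerMass (fun i ↦ k (z - x i)) x := by
  simp only [meanShift, centerMass, smul_eq_mul, div_eq_inv_mul, mul_comm (x _)]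

variable [LinearOrder K] [IsStrictOrderedRing K]

theorem comp_sq_div_le_comp_sq_div_of_abs_le {g : K → K} (hg : AntitoneOn g (Set.Ici 0))
    (h : K) ⦃u v : K⦄ (huv : |u| ≤ |v|) : g ((v / h) ^ 2) ≤ g ((u / h) ^ 2) := by
  refine hg (sq_nonneg _) (sq_nonneg _) (sq_le_sq.2 ?_)
  simpa only [abs_div] using div_le_div_of_nonneg_right huv (abs_nonneg h)

theorem mean_shift_step_monotone_down_general {k : K → K} (hk_nonneg : ∀ u, 0 ≤ k u)
    (hk_anti : ∀ ⦃u v⦄, |u| ≤ |v| → k v ≤ k u) {s : Finset ι} {x : ι → K} {y : K}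
    (hpos : 0 < ∑ i ∈ s, k (y - x i)) (hy : meanShift k s x y ≤ y)
    (hgap : ∀ i ∈ s, x i ∉ Set.Ioo (meanShift k s x y) y) :
    meanShift k s x (meanShift k s x y) ≤ meanShift k s x y := by
  simp only [meanShift_eq_centerMass] at hy hgap ⊢
  refine centerMass_le_centerMass_of_weight_le (fun _ _ ↦ hk_nonneg _) (fun _ _ ↦ hk_nonneg _)
    hpos (fun i _ hle ↦ hk_anti ?_) (fun i hi hlt ↦ hk_anti ?_)
  · exact abs_le_abs_of_nonneg (sub_nonneg.2 hle) (sub_le_sub_right hy _)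
  · have hyx : y ≤ x i := not_lt.1 fun hxy ↦ hgap i hi ⟨hlt, hxy⟩
    exact abs_le_abs_of_nonpos (sub_nonpos.2 hyx) (sub_le_sub_right hy _)

end MeanShift

theorem mean_shift_step_monotone_down
(n : ℕ) (hn : 0 < n) (x : Fin n → ℝ) (h : ℝ) (hh : 0 < h)
(g : ℝ → ℝ)
    (hg_pos : ∀ t ∈ Set.Ici (0:ℝ), 0 < g t)
    (hg_anti : StrictAntiOn g (Set.Ici 0))
    (T : ℝ → ℝ)
    (hT : ∀ z, T z = (∑ i, x i * g (((z - x i) / h) ^ 2)) / (∑ i, g (((z - x i) / h) ^ 2)))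
    (y : ℝ) (hy : T y ≤ y)
    (hno : ¬ ∃ i, T y < x i ∧ x i < y) :
    T (T y) ≤ T y := by
  obtain rfl : T = meanShift (fun u ↦ g ((u / h) ^ 2)) univ x := funext hT
  have kernel_pos (u : ℝ) : 0 < g ((u / h) ^ 2) := hg_pos _ (Set.mem_Ici.2 (sq_nonneg _))
  have weight_pos : 0 < ∑ i, g (((y - x i) / h) ^ 2) :=
    sum_pos (fun i _ ↦ kernel_pos _) ⟨⟨0, hn⟩, mem_univ _⟩
  exact mean_shift_step_monotone_down_general (fun u ↦ (kernel_pos u).le)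
    (comp_sq_div_le_comp_sq_div_of_abs_le hg_anti.antitoneOn h) weight_pos hy
    fun i _ hi ↦ hno ⟨i, hi⟩
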